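/- (Moment condition and double robustness of the AIPW score.) For all bounded measurable g1, g0 : 𝒳 → ℝ and all measurable m : 𝒳 → ℝ with ε ≤ m ≤ 1 − ε: if m ∘ X = m₀ ∘ X P-almost surely, or if g1 ∘ X = g₀1 ∘ X and g0 ∘ X = g₀0 ∘ X P-almost surely, then E[ψ(g1, g0, m)] = 0. In particular, at the true nuisance functions the moment condition E[ψ(g₀1, g₀0, m₀)] = 0 holds, identifying the average treatment effect θ₀. -/

import Mathlib

open MeasureTheory

/-!
Each half of the AIPW score has the form `g + W / m * (Y - g)`, for the weight `W = D` or
`W = 1 - D`. If `m₀` and `m₀ * g₀` are the conditional expectations of `W` and `W * Y`, then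
pulling the covariate-measurable factors out of the conditional expectation gives

  `E[g + W / m * (Y - g) | 𝒢] - g₀ = (1 - m₀ / m) * (g - g₀)`,

a product of the errors in the two nuisance functions, which vanishes as soon as one of them does.
-/

/-- The augmented inverse-probability-weighted estimate of a mean outcome: the regression `g`
corrected by its residual, weighted by `W` over the propensity `m`. The AIPW score is the
difference of two of these, with weights `D` and `1 - D`, minus `θ₀`. Where `m` is zero, the
correction is zero too. -/
noncomputable def augmentedIPW {Ω : Type*} (W Y g m : Ω → ℝ) : Ω → ℝ :=
  g + W / m * (Y - g)

section AugmentedIPW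

variable {Ω : Type*} {𝒢 mΩ : MeasurableSpace Ω} {P : Measure Ω} {W Y g g₀ m m₀ : Ω → ℝ} {ε : ℝ}

lemma integrable_div_of_pos_le (hW : Integrable W P) (hε : 0 < ε)
    (hm : AEStronglyMeasurable m P) (hεm : ∀ᵐ ω ∂P, ε ≤ m ω) : Integrable (W / m) P := by
  have hbound : ∀ᵐ ω ∂P, ‖m⁻¹ ω‖ ≤ ε⁻¹ := by
    filter_upwards [hεm] with ω hω
    rw [Pi.inv_apply, norm_inv, Real.norm_of_nonneg (hε.le.trans hω)]
    exact inv_anti₀ hε hω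
  rw [div_eq_mul_inv]
  exact hW.mul_bdd hm.inv₀ hbound

lemma integrable_mul_sub (hWY : Integrable (W * Y) P) (hWg : Integrable (W * g) P) :
    Integrable (W * (Y - g)) P := by
  simpa only [mul_sub] using hWY.sub hWg

lemma integrable_augmentedIPW (hWY : Integrable (W * Y) P) (hWg : Integrable (W * g) P)
    (hg : Integrable g P) (hε : 0 < ε) (hm : AEStronglyMeasurable m P)
    (hεm : ∀ᵐ ω ∂P, ε ≤ m ω) : Integrable (augmentedIPW W Y g m) P := by
  rw [augmentedIPW, div_mul_eq_mul_div]
  exact hg.add (integrable_div_of_pos_le (integrable_mul_sub hWY hWg) hε hm hεm)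

lemma condExp_one_sub [IsFiniteMeasure P] (h𝒢 : 𝒢 ≤ mΩ) (hW : Integrable W P) :
    P[1 - W | 𝒢] =ᵐ[P] 1 - P[W | 𝒢] := by
  have hone : P[(1 : Ω → ℝ) | 𝒢] = 1 := condExp_const h𝒢 1
  calc P[1 - W | 𝒢]
    _ =ᵐ[P] P[(1 : Ω → ℝ) | 𝒢] - P[W | 𝒢] := condExp_sub (integrable_const 1) hW 𝒢
    _ = 1 - P[W | 𝒢] := by rw [hone]

lemma condExp_mul_sub (hW : Integrable W P) (hWY : Integrable (W * Y) P)
    (hWg : Integrable (W * g) P) (hg : AEStronglyMeasurable[𝒢] g P)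
    (hm₀ : m₀ =ᵐ[P] P[W | 𝒢]) (hg₀ : m₀ * g₀ =ᵐ[P] P[W * Y | 𝒢]) :
    P[W * (Y - g) | 𝒢] =ᵐ[P] m₀ * (g₀ - g) := by
  rw [mul_sub, mul_sub]
  calc P[W * Y - W * g | 𝒢]
    _ =ᵐ[P] P[W * Y | 𝒢] - P[W * g | 𝒢] := condExp_sub hWY hWg 𝒢
    _ =ᵐ[P] m₀ * g₀ - P[W | 𝒢] * g :=
      hg₀.symm.sub (condExp_mul_of_aestronglyMeasurable_right hg hWg hW)
    _ =ᵐ[P] m₀ * g₀ - m₀ * g := .sub .rfl (hm₀.symm.mul .rfl)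

lemma condExp_augmentedIPW (h𝒢 : 𝒢 ≤ mΩ) [SigmaFinite (P.trim h𝒢)]
    (hW : Integrable W P) (hWY : Integrable (W * Y) P) (hWg : Integrable (W * g) P)
    (hres : Integrable (W * (Y - g) / m) P) (hgi : Integrable g P)
    (hg : AEStronglyMeasurable[𝒢] g P) (hm : AEStronglyMeasurable[𝒢] m P)
    (hm₀ : m₀ =ᵐ[P] P[W | 𝒢]) (hg₀ : m₀ * g₀ =ᵐ[P] P[W * Y | 𝒢]) :
    P[augmentedIPW W Y g m | 𝒢] =ᵐ[P] g + m₀ / m * (g₀ - g) := by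
  rw [augmentedIPW, div_mul_eq_mul_div, div_mul_eq_mul_div]
  calc P[g + W * (Y - g) / m | 𝒢]
    _ =ᵐ[P] P[g | 𝒢] + P[W * (Y - g) / m | 𝒢] := condExp_add hgi hres 𝒢
    _ =ᵐ[P] g + P[W * (Y - g) | 𝒢] * m⁻¹ :=
      (condExp_of_aestronglyMeasurable' h𝒢 hg hgi).add
        (condExp_mul_of_aestronglyMeasurable_right hm.inv₀ hres (integrable_mul_sub hWY hWg))
    _ =ᵐ[P] g + m₀ * (g₀ - g) / m := .add .rfl ((condExp_mul_sub hW hWY hWg hg hm₀ hg₀).mul .rfl)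

lemma condExp_augmentedIPW_eq_of_eq_or_eq (h𝒢 : 𝒢 ≤ mΩ) [SigmaFinite (P.trim h𝒢)]
    (hW : Integrable W P) (hWY : Integrable (W * Y) P) (hWg : Integrable (W * g) P)
    (hgi : Integrable g P)
    (hg : AEStronglyMeasurable[𝒢] g P) (hm : AEStronglyMeasurable[𝒢] m P)
    (hm₀ : m₀ =ᵐ[P] P[W | 𝒢]) (hg₀ : m₀ * g₀ =ᵐ[P] P[W * Y | 𝒢])
    (hε : 0 < ε) (hεm : ∀ᵐ ω ∂P, ε ≤ m ω) (hor : ∀ᵐ ω ∂P, m ω = m₀ ω ∨ g ω = g₀ ω) :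
    P[augmentedIPW W Y g m | 𝒢] =ᵐ[P] g₀ := by
  have hres : Integrable (W * (Y - g) / m) P :=
    integrable_div_of_pos_le (integrable_mul_sub hWY hWg) hε (hm.mono h𝒢) hεm
  filter_upwards [condExp_augmentedIPW h𝒢 hW hWY hWg hres hgi hg hm hm₀ hg₀, hεm, hor]
    with ω hω hεω horω
  rw [hω]
  simp only [Pi.add_apply, Pi.mul_apply, Pi.div_apply, Pi.sub_apply]
  rcases horω with hmω | hgω
  · rw [← hmω, div_self (hε.trans_le hεω).ne', one_mul, add_sub_cancel]
  · rw [hgω, sub_self, mul_zero, add_zero]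

end AugmentedIPW

/-- The AIPW score before centering at `θ₀`: the estimated treated mean minus the estimated
control mean. -/
noncomputable def aipwContrast {Ω : Type*} (D Y g1 g0 m : Ω → ℝ) : Ω → ℝ :=
  augmentedIPW D Y g1 m - augmentedIPW (1 - D) Y g0 (1 - m)

section AIPWContrast

variable {Ω : Type*} {𝒢 mΩ : MeasurableSpace Ω} {P : Measure Ω}
  {D Y m₀ g₀1 g₀0 g1 g0 m : Ω → ℝ} {ε : ℝ}

lemma integrable_aipwContrast
    (hDY : Integrable (D * Y) P) (hDY' : Integrable ((1 - D) * Y) P)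
    (hg1 : Integrable g1 P) (hg0 : Integrable g0 P)
    (hDg1 : Integrable (D * g1) P) (hDg0 : Integrable ((1 - D) * g0) P)
    (hm : AEStronglyMeasurable m P) (hε : 0 < ε) (hmε : ∀ᵐ ω ∂P, ε ≤ m ω ∧ m ω ≤ 1 - ε) :
    Integrable (aipwContrast D Y g1 g0 m) P :=
  (integrable_augmentedIPW hDY hDg1 hg1 hε hm (hmε.mono fun _ h => h.1)).sub
    (integrable_augmentedIPW hDY' hDg0 hg0 hε (aestronglyMeasurable_const.sub hm)
      (hmε.mono fun _ h => le_sub_comm.mp h.2))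

lemma condExp_aipwContrast_eq_of_eq_or_eq [IsFiniteMeasure P] (h𝒢 : 𝒢 ≤ mΩ)
    (hD : Integrable D P) (hDY : Integrable (D * Y) P) (hDY' : Integrable ((1 - D) * Y) P)
    (hg1 : Integrable g1 P) (hg0 : Integrable g0 P)
    (hDg1 : Integrable (D * g1) P) (hDg0 : Integrable ((1 - D) * g0) P)
    (hg1m : AEStronglyMeasurable[𝒢] g1 P) (hg0m : AEStronglyMeasurable[𝒢] g0 P)
    (hm : AEStronglyMeasurable[𝒢] m P)
    (hm₀ : m₀ =ᵐ[P] P[D | 𝒢]) (hg₀1 : m₀ * g₀1 =ᵐ[P] P[D * Y | 𝒢])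
    (hg₀0 : (1 - m₀) * g₀0 =ᵐ[P] P[(1 - D) * Y | 𝒢])
    (hε : 0 < ε) (hmε : ∀ᵐ ω ∂P, ε ≤ m ω ∧ m ω ≤ 1 - ε)
    (hor : ∀ᵐ ω ∂P, m ω = m₀ ω ∨ g1 ω = g₀1 ω ∧ g0 ω = g₀0 ω) :
    P[aipwContrast D Y g1 g0 m | 𝒢] =ᵐ[P] g₀1 - g₀0 := by
  have hD' : Integrable (1 - D) P := (integrable_const 1).sub hD
  have hm' : AEStronglyMeasurable[𝒢] (1 - m) P := aestronglyMeasurable_const.sub hm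
  have hεm : ∀ᵐ ω ∂P, ε ≤ m ω := hmε.mono fun _ h => h.1
  have hεm' : ∀ᵐ ω ∂P, ε ≤ (1 - m) ω := hmε.mono fun _ h => le_sub_comm.mp h.2
  have hm₀' : 1 - m₀ =ᵐ[P] P[1 - D | 𝒢] :=
    (Filter.EventuallyEq.rfl.sub hm₀).trans (condExp_one_sub h𝒢 hD).symm
  have hor1 : ∀ᵐ ω ∂P, m ω = m₀ ω ∨ g1 ω = g₀1 ω := hor.mono fun _ h => h.imp_right And.left
  have hor0 : ∀ᵐ ω ∂P, (1 - m) ω = (1 - m₀) ω ∨ g0 ω = g₀0 ω :=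
    hor.mono fun _ h => h.imp (congrArg (fun x : ℝ => 1 - x)) And.right
  have htreated : P[augmentedIPW D Y g1 m | 𝒢] =ᵐ[P] g₀1 :=
    condExp_augmentedIPW_eq_of_eq_or_eq h𝒢 hD hDY hDg1 hg1 hg1m hm hm₀ hg₀1 hε hεm hor1
  have hcontrol : P[augmentedIPW (1 - D) Y g0 (1 - m) | 𝒢] =ᵐ[P] g₀0 :=
    condExp_augmentedIPW_eq_of_eq_or_eq h𝒢 hD' hDY' hDg0 hg0 hg0m hm' hm₀' hg₀0 hε hεm' hor0
  exact (condExp_sub (integrable_augmentedIPW hDY hDg1 hg1 hε (hm.mono h𝒢) hεm)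
    (integrable_augmentedIPW hDY' hDg0 hg0 hε (hm'.mono h𝒢) hεm') 𝒢).trans (htreated.sub hcontrol)

theorem aipw_double_robustness_general [IsProbabilityMeasure P] (h𝒢 : 𝒢 ≤ mΩ)
    (hD : Integrable D P) (hDY : Integrable (D * Y) P) (hDY' : Integrable ((1 - D) * Y) P)
    (hm₀ : m₀ =ᵐ[P] P[D | 𝒢]) (hg₀1 : m₀ * g₀1 =ᵐ[P] P[D * Y | 𝒢])
    (hg₀0 : (1 - m₀) * g₀0 =ᵐ[P] P[(1 - D) * Y | 𝒢])
    {θ₀ : ℝ} (hθ₀ : θ₀ = ∫ ω, (g₀1 ω - g₀0 ω) ∂P)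
    (hg1m : AEStronglyMeasurable[𝒢] g1 P) (hg0m : AEStronglyMeasurable[𝒢] g0 P)
    (hg1 : Integrable g1 P) (hg0 : Integrable g0 P)
    (hDg1 : Integrable (D * g1) P) (hDg0 : Integrable (D * g0) P)
    (hm : AEStronglyMeasurable[𝒢] m P) (hε : 0 < ε) (hmε : ∀ᵐ ω ∂P, ε ≤ m ω ∧ m ω ≤ 1 - ε)
    (hor : ∀ᵐ ω ∂P, m ω = m₀ ω ∨ g1 ω = g₀1 ω ∧ g0 ω = g₀0 ω) :
    ∫ ω, ((g1 ω - g0 ω) + (D ω / m ω) * (Y ω - g1 ω)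
        - ((1 - D ω) / (1 - m ω)) * (Y ω - g0 ω) - θ₀) ∂P = 0 := by
  have hDg0' : Integrable ((1 - D) * g0) P := by
    simpa only [sub_mul, one_mul] using hg0.sub hDg0
  have hint : Integrable (aipwContrast D Y g1 g0 m) P :=
    integrable_aipwContrast hDY hDY' hg1 hg0 hDg1 hDg0' (hm.mono h𝒢) hε hmε
  have hcond : P[aipwContrast D Y g1 g0 m | 𝒢] =ᵐ[P] g₀1 - g₀0 :=
    condExp_aipwContrast_eq_of_eq_or_eq h𝒢 hD hDY hDY' hg1 hg0 hDg1 hDg0' hg1m hg0m hm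
      hm₀ hg₀1 hg₀0 hε hmε hor
  calc ∫ ω, ((g1 ω - g0 ω) + (D ω / m ω) * (Y ω - g1 ω)
        - ((1 - D ω) / (1 - m ω)) * (Y ω - g0 ω) - θ₀) ∂P
    _ = ∫ ω, (aipwContrast D Y g1 g0 m ω - θ₀) ∂P := by
      congr with ω
      simp only [aipwContrast, augmentedIPW, Pi.add_apply, Pi.sub_apply, Pi.mul_apply,
        Pi.div_apply, Pi.one_apply]
      ring
    _ = ∫ ω, aipwContrast D Y g1 g0 m ω ∂P - θ₀ := by
      rw [integral_sub hint (integrable_const θ₀), integral_const, probReal_univ, one_smul]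
    _ = ∫ ω, P[aipwContrast D Y g1 g0 m | 𝒢] ω ∂P - θ₀ := by rw [integral_condExp h𝒢]
    _ = ∫ ω, (g₀1 ω - g₀0 ω) ∂P - θ₀ := congrArg (· - θ₀) (integral_congr_ae hcond)
    _ = 0 := by rw [hθ₀, sub_self]

end AIPWContrast

/-- Moment condition and double robustness of the AIPW score: if either the propensity
score or both outcome regressions are correctly specified (a.s.), the expected AIPW score
is zero; in particular it is zero at the true nuisance functions. -/
theorem aipw_double_robustness
    {Ω 𝓧 : Type*} [MeasurableSpace Ω] [MeasurableSpace 𝓧]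
    (P : MeasureTheory.Measure Ω) [MeasureTheory.IsProbabilityMeasure P]
    (X : Ω → 𝓧) (hX : Measurable X)
    (D : Ω → ℝ) (hD : Measurable D) (hD01 : ∀ ω, D ω = 0 ∨ D ω = 1)
    (Y : Ω → ℝ) (hY : MeasureTheory.Integrable Y P)
    (hDY : MeasureTheory.Integrable (fun ω => D ω * Y ω) P)
    (hDY' : MeasureTheory.Integrable (fun ω => (1 - D ω) * Y ω) P)
    (ε : ℝ) (hε0 : 0 < ε) (hε : ε < 1 / 2)
    (m₀ : 𝓧 → ℝ) (hm₀ : Measurable m₀)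
    (hm₀bd : ∀ x, ε ≤ m₀ x ∧ m₀ x ≤ 1 - ε)
    (hm₀ver : (fun ω => m₀ (X ω)) =ᵐ[P] P[D | MeasurableSpace.comap X inferInstance])
    (g₀1 g₀0 : 𝓧 → ℝ) (hg₀1 : Measurable g₀1) (hg₀0 : Measurable g₀0)
    (C₀ : ℝ) (hg₀1bd : ∀ x, |g₀1 x| ≤ C₀) (hg₀0bd : ∀ x, |g₀0 x| ≤ C₀)
    (hg₀1ver : (fun ω => m₀ (X ω) * g₀1 (X ω))
      =ᵐ[P] P[fun ω => D ω * Y ω | MeasurableSpace.comap X inferInstance])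
    (hg₀0ver : (fun ω => (1 - m₀ (X ω)) * g₀0 (X ω))
      =ᵐ[P] P[fun ω => (1 - D ω) * Y ω | MeasurableSpace.comap X inferInstance])
    (θ₀ : ℝ) (hθ₀ : θ₀ = ∫ ω, (g₀1 (X ω) - g₀0 (X ω)) ∂P)
    (g1 g0 : 𝓧 → ℝ) (hg1 : Measurable g1) (hg0 : Measurable g0)
    (C₁ : ℝ) (hg1bd : ∀ x, |g1 x| ≤ C₁) (hg0bd : ∀ x, |g0 x| ≤ C₁)
    (m : 𝓧 → ℝ) (hm : Measurable m) (hmbd : ∀ x, ε ≤ m x ∧ m x ≤ 1 - ε) :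
    (((fun ω => m (X ω)) =ᵐ[P] (fun ω => m₀ (X ω)) ∨
      ((fun ω => g1 (X ω)) =ᵐ[P] (fun ω => g₀1 (X ω)) ∧
        (fun ω => g0 (X ω)) =ᵐ[P] (fun ω => g₀0 (X ω)))) →
      ∫ ω, ((g1 (X ω) - g0 (X ω)) + (D ω / m (X ω)) * (Y ω - g1 (X ω))
          - ((1 - D ω) / (1 - m (X ω))) * (Y ω - g0 (X ω)) - θ₀) ∂P = 0) ∧
    ∫ ω, ((g₀1 (X ω) - g₀0 (X ω)) + (D ω / m₀ (X ω)) * (Y ω - g₀1 (X ω))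
        - ((1 - D ω) / (1 - m₀ (X ω))) * (Y ω - g₀0 (X ω)) - θ₀) ∂P = 0 := by
  have hDi : Integrable D P := .of_bound hD.aestronglyMeasurable 1 <| .of_forall fun ω => by
    rcases hD01 ω with h | h <;> simp [h]
  have hσ {g : 𝓧 → ℝ} (hg : Measurable g) :
      AEStronglyMeasurable[MeasurableSpace.comap X inferInstance] (fun ω => g (X ω)) P :=
    (hg.comp (comap_measurable X)).aestronglyMeasurable
  have hgX {g : 𝓧 → ℝ} {C : ℝ} (hg : Measurable g) (hC : ∀ x, |g x| ≤ C) :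
      Integrable (fun ω => g (X ω)) P :=
    .of_bound (hg.comp hX).aestronglyMeasurable C <| .of_forall fun ω => hC (X ω)
  have hDgX {g : 𝓧 → ℝ} {C : ℝ} (hg : Measurable g) (hC : ∀ x, |g x| ≤ C) :
      Integrable (fun ω => D ω * g (X ω)) P :=
    hDi.mul_bdd (hg.comp hX).aestronglyMeasurable <| .of_forall fun ω => hC (X ω)
  exact ⟨fun hor => aipw_double_robustness_general hX.comap_le hDi hDY hDY' hm₀ver hg₀1ver hg₀0ver
      hθ₀ (hσ hg1) (hσ hg0) (hgX hg1 hg1bd) (hgX hg0 hg0bd) (hDgX hg1 hg1bd) (hDgX hg0 hg0bd)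
      (hσ hm) hε0 (.of_forall fun ω => hmbd (X ω))
      (hor.elim (·.mono fun _ => .inl) fun h => (h.1.and h.2).mono fun _ => .inr),
    aipw_double_robustness_general hX.comap_le hDi hDY hDY' hm₀ver hg₀1ver hg₀0ver
      hθ₀ (hσ hg₀1) (hσ hg₀0) (hgX hg₀1 hg₀1bd) (hgX hg₀0 hg₀0bd) (hDgX hg₀1 hg₀1bd)
      (hDgX hg₀0 hg₀0bd) (hσ hm₀) hε0 (.of_forall fun ω => hm₀bd (X ω))
      (.of_forall fun _ => .inl rfl)⟩
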